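/- arXiv:math/0012267 — 2 statements merged into one kernel-verified Lean document; each statement's English description precedes it below -/
import Mathlib

section
/- (Lemma 3.2.) Fix T > 0. For all positive constants c₋ ≤ c₊ and χ₋ ≤ χ₊ there exist positive constants C₋, C₊ and ε₀ such that the following holds for all ε ∈ (0,ε₀]: let β = β(ε) ≥ 0 with β → 0 as ε → 0, let ã : [−T,T] → ℝ be continuous with −c₊(β ∨ t²) ≤ ã(t) ≤ −c₋(β ∨ t²) for all |t| ≤ T, let χ₀ ∈ [χ₋, χ₊], and set α̃(t,s) = ∫_s^t ã(u) du. Then the function F(t) := χ₀ e^{α̃(t,−T)/ε} + ε⁻¹∫_{−T}^t e^{α̃(t,s)/ε} ds satisfies C₋/(β ∨ ε^{2/3}) ≤ F(t) ≤ C₊/(β ∨ ε^{2/3}) for |t| ≤ √β ∨ ε^{1/3}, and C₋/t² ≤ F(t) ≤ C₊/t² for √β ∨ ε^{1/3} ≤ |t| ≤ T. -/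
open MeasureTheory Real Set

namespace BerglundGentz

noncomputable section

/-- Partial derivative of the drift `f` with respect to the space variable. -/
def dxf (f : ℝ → ℝ → ℝ) (x t : ℝ) : ℝ := deriv (fun y => f y t) x

/-- Second partial derivative of the drift `f` with respect to the space variable. -/
def dxxf (f : ℝ → ℝ → ℝ) (x t : ℝ) : ℝ := iteratedDeriv 2 (fun y => f y t) x

/-- Hypotheses on the symmetric class of double-well drifts `f`, with equilibrium
branches `0` and `± xs`, minimal barrier parameter `a₀`, and comparison constants
`cm ≤ cp` (all `≍` bounds are encoded through `cm`, `cp`). -/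
structure SymClass (d T a₁ cm cp ε a₀ : ℝ) (f : ℝ → ℝ → ℝ) (xs : ℝ → ℝ) : Prop where
  hd : 0 < d
  hT : 0 < T
  hT' : T < 1 / 2
  hε : 0 < ε
  ha₀ : 0 ≤ a₀
  ha₁ : 0 < a₁
  hcm : 0 < cm
  hcmcp : cm ≤ cp
  smooth : ContDiffOn ℝ 4 (fun p : ℝ × ℝ => f p.1 p.2) (Icc (-d) d ×ˢ univ)
  periodic : ∀ x t, f x (t + 1) = f x t
  odd : ∀ x t, f (-x) t = -f x t
  xs_cont : Continuous xs
  xs_pos : ∀ t, 0 < xs t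
  xs_le_d : ∀ t, xs t ≤ d
  zeros : ∀ x t, |x| ≤ d → (f x t = 0 ↔ x = 0 ∨ x = xs t ∨ x = -xs t)
  stab0 : ∀ t, 0 < dxf f 0 t
  stabstar : ∀ t, dxf f (xs t) t < 0
  pitchfork : iteratedDeriv 3 (fun y => f y 0) 0 < 0
  a_taylor : ∀ t, |t| ≤ T → |dxf f 0 t - (a₀ + a₁ * t ^ 2)| ≤ cp * |t| ^ 3
  xs_asymp : ∀ t, |t| ≤ T →
    cm * max (Real.sqrt a₀) |t| ≤ xs t ∧ xs t ≤ cp * max (Real.sqrt a₀) |t|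
  xs_mid : ∀ t, T ≤ t → t ≤ 1 - T → cm ≤ xs t ∧ xs t ≤ cp
  a_asymp : ∀ t, |t| ≤ T →
    cm * max a₀ (t ^ 2) ≤ dxf f 0 t ∧ dxf f 0 t ≤ cp * max a₀ (t ^ 2)
  a_mid : ∀ t, T ≤ t → t ≤ 1 - T → cm ≤ dxf f 0 t ∧ dxf f 0 t ≤ cp
  astar_asymp : ∀ t, cm * dxf f 0 t ≤ -dxf f (xs t) t ∧ -dxf f (xs t) t ≤ cp * dxf f 0 t

/-- Hypotheses on the asymmetric class of double-well drifts `f`, with stable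
equilibrium branches `xm < xp`, unstable branch `x0`, avoided saddle-node
bifurcation near `(xc, 0)`, and comparison constants `cm ≤ cp`. -/
structure AsymClass (d T a₁ cm cp ε a₀ xc : ℝ) (f : ℝ → ℝ → ℝ)
    (xm x0 xp : ℝ → ℝ) : Prop where
  hd : 0 < d
  hT : 0 < T
  hT' : T < 1 / 2
  hε : 0 < ε
  ha₀ : 0 ≤ a₀
  ha₁ : 0 < a₁
  hcm : 0 < cm
  hcmcp : cm ≤ cp
  smooth : ContDiffOn ℝ 3 (fun p : ℝ × ℝ => f p.1 p.2) (Icc (-d) d ×ˢ univ)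
  periodic : ∀ x t, f x (t + 1) = f x t
  xm_cont : Continuous xm
  x0_cont : Continuous x0
  xp_cont : Continuous xp
  order : ∀ t, xm t < x0 t ∧ x0 t < xp t
  range : ∀ t, xm t ∈ Icc (-d) d ∧ x0 t ∈ Icc (-d) d ∧ xp t ∈ Icc (-d) d
  zeros : ∀ x t, |x| ≤ d → (f x t = 0 ↔ x = xm t ∨ x = x0 t ∨ x = xp t)
  isolated : ∀ δ > (0:ℝ), ∃ ρ > (0:ℝ), ∀ x t, |x| ≤ d →
    δ ≤ |x - xm t| → δ ≤ |x - x0 t| → δ ≤ |x - xp t| → ρ ≤ |f x t|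
  stab_p : ∀ t, dxf f (xp t) t < 0
  stab_m : ∀ t, dxf f (xm t) t < 0
  stab_0 : ∀ t, 0 < dxf f (x0 t) t
  hxc : |xc| < d
  fold : dxxf f xc 0 < 0
  dxf_small : ∀ t, |t| ≤ T → |dxf f xc t| ≤ cp * t ^ 2
  f_taylor : ∀ t, |t| ≤ T → |f xc t - (a₀ + a₁ * t ^ 2)| ≤ cp * |t| ^ 3
  xp_asymp : ∀ t, |t| ≤ T → cm * max (Real.sqrt a₀) |t| ≤ xp t - xc ∧
    xp t - xc ≤ cp * max (Real.sqrt a₀) |t|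
  x0_asymp : ∀ t, |t| ≤ T → cm * max (Real.sqrt a₀) |t| ≤ xc - x0 t ∧
    xc - x0 t ≤ cp * max (Real.sqrt a₀) |t|
  ap_asymp : ∀ t, |t| ≤ T → cm * max (Real.sqrt a₀) |t| ≤ -dxf f (xp t) t ∧
    -dxf f (xp t) t ≤ cp * max (Real.sqrt a₀) |t|
  a0_asymp : ∀ t, |t| ≤ T → cm * max (Real.sqrt a₀) |t| ≤ dxf f (x0 t) t ∧
    dxf f (x0 t) t ≤ cp * max (Real.sqrt a₀) |t|
  xm_asymp : ∀ t, |t| ≤ T → cm ≤ xc - xm t ∧ xc - xm t ≤ cp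
  am_asymp : ∀ t, |t| ≤ T → cm ≤ -dxf f (xm t) t ∧ -dxf f (xm t) t ≤ cp
  /-- an analogous avoided saddle-node bifurcation, with opposite signs, occurs at
  some `(xc', tc)` with `tc ∈ (T, 1-T)`, and branches and linearizations stay
  bounded away from zero between the two close encounters. -/
  second_bif : ∃ xc' tc a₁' : ℝ, T < tc ∧ tc < 1 - T ∧ |xc'| ≤ d ∧
    cm ≤ a₁' ∧ a₁' ≤ cp ∧ 0 < dxxf f xc' tc ∧
    (∀ t, |t| ≤ T → |dxf f xc' (tc + t)| ≤ cp * t ^ 2 ∧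
      |f xc' (tc + t) + (a₀ + a₁' * t ^ 2)| ≤ cp * |t| ^ 3) ∧
    (∀ t, (T ≤ t ∧ t ≤ tc - T) ∨ (tc + T ≤ t ∧ t ≤ 1 - T) →
      cm ≤ xp t - x0 t ∧ cm ≤ x0 t - xm t ∧
      cm ≤ -dxf f (xp t) t ∧ cm ≤ -dxf f (xm t) t ∧ cm ≤ dxf f (x0 t) t)

/-- `xdet` solves the slow ODE `ε ẋ = f(x,t)` on `[-T,T]` and starts at time `-T`
at distance `≍ ε` above the branch `xs`. -/
structure IsDetSol (ε T cm cp : ℝ) (f : ℝ → ℝ → ℝ) (xs xdet : ℝ → ℝ) : Prop where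
  ode : ∀ t ∈ Icc (-T) T, HasDerivAt xdet (f (xdet t) t / ε) t
  init_lo : cm * ε ≤ xdet (-T) - xs (-T)
  init_hi : xdet (-T) - xs (-T) ≤ cp * ε

/-- The linearization of `f` along the deterministic solution. -/
def abar (f : ℝ → ℝ → ℝ) (xdet : ℝ → ℝ) (t : ℝ) : ℝ := dxf f (xdet t) t

/-- `ᾱ(t,s) = ∫_s^t ā(u) du`. -/
def albar (f : ℝ → ℝ → ℝ) (xdet : ℝ → ℝ) (t s : ℝ) : ℝ := ∫ u in s..t, abar f xdet u

/-- The function `ζ(t)` governing the variance of the linearized process. -/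
def zeta (ε T : ℝ) (f : ℝ → ℝ → ℝ) (xdet : ℝ → ℝ) (t : ℝ) : ℝ :=
  Real.exp (2 * albar f xdet t (-T) / ε) / (2 * |abar f xdet (-T)|)
    + ε⁻¹ * ∫ s in (-T)..t, Real.exp (2 * albar f xdet t s / ε)

/-- `α(t,s) = ∫_s^t a(u) du` where `a(u) = ∂ₓf(0,u)`. -/
def alphaInt (f : ℝ → ℝ → ℝ) (t s : ℝ) : ℝ := ∫ u in s..t, dxf f 0 u

/-- `α̂(t,s) = ∫_s^t ∂ₓf(x̂det_u, u) du` along a solution `xhat`. -/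
def alphaHat (f : ℝ → ℝ → ℝ) (xhat : ℝ → ℝ) (t s : ℝ) : ℝ := ∫ u in s..t, dxf f (xhat u) u

/-- `W` is a standard Brownian motion on `(Ω, ℙ)`. -/
structure IsBM {Ω : Type} [MeasurableSpace Ω] (ℙ : Measure Ω) (W : ℝ → Ω → ℝ) : Prop where
  meas : ∀ t, Measurable (W t)
  cont : ∀ᵐ ω ∂ℙ, Continuous fun t => W t ω
  gauss : ∀ s t : ℝ, s ≤ t →
    ℙ.map (fun ω => W t ω - W s ω) = ProbabilityTheory.gaussianReal 0 (Real.toNNReal (t - s))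
  indep : ∀ s t u v : ℝ, s ≤ t → t ≤ u → u ≤ v →
    ProbabilityTheory.IndepFun (fun ω => W t ω - W s ω) (fun ω => W v ω - W u ω) ℙ

/-- `X` is the pathwise solution, driven by `W`, of
`dx = ε⁻¹ f(x,t) dt + σ ε^{-1/2} dW` with `X_{t₀} = x₀`. -/
structure IsSol {Ω : Type} [MeasurableSpace Ω] (ℙ : Measure Ω) (ε σ : ℝ)
    (f : ℝ → ℝ → ℝ) (W : ℝ → Ω → ℝ) (t₀ x₀ : ℝ) (X : ℝ → Ω → ℝ) : Prop where
  meas : ∀ t, Measurable (X t)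
  sol : ∀ᵐ ω ∂ℙ, Continuous (fun t => X t ω) ∧ ∀ t, t₀ ≤ t →
    X t ω = x₀ + ε⁻¹ * (∫ s in t₀..t, f (X s ω) s)
      + σ / Real.sqrt ε * (W t ω - W t₀ ω)

/-- `Y` is the pathwise solution, driven by `W`, of the linear SDE
`dy = ε⁻¹ ã(t) y dt + σ ε^{-1/2} dW` with `Y_{t₀} = y₀`. -/
structure IsLinSol {Ω : Type} [MeasurableSpace Ω] (ℙ : Measure Ω) (ε σ : ℝ)
    (atil : ℝ → ℝ) (W : ℝ → Ω → ℝ) (t₀ y₀ : ℝ) (Y : ℝ → Ω → ℝ) : Prop where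
  meas : ∀ t, Measurable (Y t)
  sol : ∀ᵐ ω ∂ℙ, Continuous (fun t => Y t ω) ∧ ∀ t, t₀ ≤ t →
    Y t ω = y₀ + ε⁻¹ * (∫ s in t₀..t, atil s * Y s ω)
      + σ / Real.sqrt ε * (W t ω - W t₀ ω)

/-- The slow-fast scalar quantity of Lemmas 3.2/4.1:
`F(t) = χ₀ e^{α̃(t,-T)/ε} + ε⁻¹ ∫_{-T}^t e^{α̃(t,s)/ε} ds`. -/
def Ffun (ε T : ℝ) (atil : ℝ → ℝ) (χ₀ t : ℝ) : ℝ :=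
  χ₀ * Real.exp ((∫ u in (-T)..t, atil u) / ε)
    + ε⁻¹ * ∫ s in (-T)..t, Real.exp ((∫ u in s..t, atil u) / ε)

end


set_option maxHeartbeats 2000000 in
theorem aux_core (T cl cu xl xu h β χ₀ t : ℝ) (atil : ℝ → ℝ)
    (hT : 0 < T) (hc : 0 < cl) (hcc : cl ≤ cu) (hχ : 0 < xl)
    (hh : 0 < h) (hhT : h ≤ T / 2) (hβ : 0 ≤ β) (hβT : β ≤ T ^ 2 / 4)
    (hcont : ContinuousOn atil (Icc (-T) T))
    (hb : ∀ t, |t| ≤ T → -(cu * max β (t ^ 2)) ≤ atil t ∧ atil t ≤ -(cl * max β (t ^ 2)))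
    (h1 : xl ≤ χ₀) (h2 : χ₀ ≤ xu) (ht : |t| ≤ T) (M : ℝ)
    (hM : M = max (max β (h ^ 2)) (t ^ 2)) :
    min (Real.exp (-(4 * cu))) (xl * Real.exp (-(4 * cu)) * (T ^ 2 / 4)) / M
      ≤ Ffun (h ^ 3) T atil χ₀ t ∧
    Ffun (h ^ 3) T atil χ₀ t ≤ (xu * T ^ 2 + 4 * Real.exp (cl / 6) / cl) / M := by
  obtain ⟨ht1, ht2⟩ := abs_le.mp ht
  have hMβ : β ≤ M := by rw [hM]; exact le_trans (le_max_left _ _) (le_max_left _ _)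
  have hMh : h ^ 2 ≤ M := by rw [hM]; exact le_trans (le_max_right _ _) (le_max_left _ _)
  have hMt : t ^ 2 ≤ M := by rw [hM]; exact le_max_right _ _
  have hM0 : 0 < M := lt_of_lt_of_le (by positivity) hMh
  have hMT : M ≤ T ^ 2 := by
    rw [hM]
    refine max_le (max_le (by nlinarith) (by nlinarith)) (by nlinarith)
  have hε : 0 < h ^ 3 := by positivity
  have hint : ∀ a b, -T ≤ a → a ≤ b → b ≤ T → IntervalIntegrable atil volume a b := by
    intro a b ha hab hbT
    apply ContinuousOn.intervalIntegrable
    rw [uIcc_of_le hab]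
    exact hcont.mono (Icc_subset_Icc ha hbT)
  -- continuity of the integrand
  have hce : ContinuousOn (fun s => Real.exp ((∫ u in s..t, atil u) / h ^ 3)) (Icc (-T) t) := by
    have := intervalIntegral.continuousOn_primitive_interval' (hint (-T) t le_rfl ht1 ht2)
      (right_mem_uIcc)
    rw [uIcc_of_le ht1] at this
    have h3 : ContinuousOn (fun s => Real.exp ((-(∫ u in t..s, atil u)) / h ^ 3)) (Icc (-T) t) :=
      (this.neg.div_const _).rexp
    refine h3.congr ?_
    intro s _
    simp only
    rw [intervalIntegral.integral_symm s t, neg_neg]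
  have hcei : ∀ a b, -T ≤ a → a ≤ b → b ≤ t → IntervalIntegrable
      (fun s => Real.exp ((∫ u in s..t, atil u) / h ^ 3)) volume a b := by
    intro a b ha hab hbT
    apply ContinuousOn.intervalIntegrable
    rw [uIcc_of_le hab]
    exact hce.mono (Icc_subset_Icc ha hbT)
  -- upper bound of exponent
  have hup : ∀ s, -T ≤ s → s ≤ t →
      (∫ u in s..t, atil u) / h ^ 3 ≤ cl / 6 - cl / 4 * M / h ^ 3 * (t - s) := by
    intro s hs hst
    have e1 : (∫ u in s..t, atil u) ≤ ∫ u in s..t, -(cl * β) := by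
      apply intervalIntegral.integral_mono_on hst (hint s t hs hst ht2) (by simp)
      intro u hu
      have := (hb u (abs_le.mpr ⟨by linarith [hu.1], by linarith [hu.2]⟩)).2
      have h4 := mul_le_mul_of_nonneg_left (le_max_left β (u ^ 2)) hc.le
      linarith
    have e2 : (∫ u in s..t, atil u) ≤ ∫ u in s..t, -(cl * u ^ 2) := by
      apply intervalIntegral.integral_mono_on hst (hint s t hs hst ht2)
        (Continuous.intervalIntegrable (by fun_prop) _ _)
      intro u hu
      have := (hb u (abs_le.mpr ⟨by linarith [hu.1], by linarith [hu.2]⟩)).2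
      have h4 := mul_le_mul_of_nonneg_left (le_max_right β (u ^ 2)) hc.le
      linarith
    rw [intervalIntegral.integral_const, smul_eq_mul] at e1
    rw [intervalIntegral.integral_neg, intervalIntegral.integral_const_mul, integral_pow] at e2
    norm_num at e2
    have hd : 0 ≤ t - s := by linarith
    have key : (∫ u in s..t, atil u) ≤ -cl * (M * (t - s) / 4 - h ^ 3 / 6) := by
      rcases max_choice (max β (h ^ 2)) (t ^ 2) with hm | hm
      · rcases max_choice β (h ^ 2) with hm' | hm'
        · rw [hm, hm'] at hM
          rw [hM]
          have : 0 ≤ cl * β * (t - s) := by positivity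
          have : 0 ≤ cl * h ^ 3 := by positivity
          nlinarith
        · rw [hm, hm'] at hM
          rw [hM]
          have k1 : (t - s) ^ 3 / 4 ≤ t ^ 3 - s ^ 3 := by
            have : 0 ≤ (t - s) * (t + s) ^ 2 := by positivity
            nlinarith
          have k2 : 3 * h ^ 2 * (t - s) - 2 * h ^ 3 ≤ (t - s) ^ 3 := by
            have : 0 ≤ ((t - s) + 2 * h) * ((t - s) - h) ^ 2 := by positivity
            nlinarith
          have k3 : 0 ≤ cl * ((t ^ 3 - s ^ 3) - (3 * h ^ 2 * (t - s) - 2 * h ^ 3) / 4) :=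
            mul_nonneg hc.le (by linarith)
          nlinarith
      · rw [hm] at hM
        rw [hM]
        have k1 : 3 / 4 * t ^ 2 * (t - s) ≤ t ^ 3 - s ^ 3 := by
          have : 0 ≤ (t - s) * (t / 2 + s) ^ 2 := by positivity
          nlinarith
        have k3 : 0 ≤ cl * ((t ^ 3 - s ^ 3) - 3 / 4 * t ^ 2 * (t - s)) :=
          mul_nonneg hc.le (by linarith)
        have : 0 ≤ cl * h ^ 3 := by positivity
        nlinarith
    rw [div_le_iff₀ hε]
    have : (cl / 6 - cl / 4 * M / h ^ 3 * (t - s)) * h ^ 3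
        = -cl * (M * (t - s) / 4 - h ^ 3 / 6) := by
      field_simp
      ring
    rw [this]
    exact key
  have hneg : (∫ u in (-T)..t, atil u) / h ^ 3 ≤ 0 := by
    apply div_nonpos_of_nonpos_of_nonneg _ hε.le
    have e1 : (∫ u in (-T)..t, atil u) ≤ ∫ u in (-T)..t, (0:ℝ) := by
      apply intervalIntegral.integral_mono_on ht1 (hint _ t le_rfl ht1 ht2) (by simp)
      intro u hu
      have := (hb u (abs_le.mpr ⟨by linarith [hu.1], by linarith [hu.2]⟩)).2
      have h4 : 0 ≤ cl * max β (u ^ 2) := by positivity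
      linarith
    simpa using e1
  -- lower bound of exponent
  have hlo : ∀ s, -T ≤ s → s ≤ t → t - s ≤ h ^ 3 / M →
      -(4 * cu) ≤ (∫ u in s..t, atil u) / h ^ 3 := by
    intro s hs hst hsM
    have hMs : M * (t - s) ≤ h ^ 3 := by
      rw [le_div_iff₀ hM0] at hsM
      linarith
    have hsh : t - s ≤ h := by
      have : h ^ 2 * (t - s) ≤ M * (t - s) := mul_le_mul_of_nonneg_right hMh (by linarith)
      have h5 : h ^ 2 * (t - s) ≤ h ^ 2 * h := by nlinarith
      exact le_of_mul_le_mul_left h5 (by positivity)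
    have e1 : (∫ u in s..t, -(cu * (4 * M))) ≤ ∫ u in s..t, atil u := by
      apply intervalIntegral.integral_mono_on hst (by simp) (hint s t hs hst ht2)
      intro u hu
      have := (hb u (abs_le.mpr ⟨by linarith [hu.1], by linarith [hu.2]⟩)).1
      have hu2 : u ^ 2 ≤ 4 * M := by
        have a1 : (t - u) ^ 2 ≤ h ^ 2 := by
          apply pow_le_pow_left₀ <;> linarith [hu.1, hu.2]
        nlinarith [sq_nonneg (2 * t - u)]
      have h4 : cu * max β (u ^ 2) ≤ cu * (4 * M) :=
        mul_le_mul_of_nonneg_left (max_le (by linarith) hu2) (by linarith)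
      linarith
    rw [intervalIntegral.integral_const, smul_eq_mul] at e1
    rw [le_div_iff₀ hε]
    have : cu * (M * (t - s)) ≤ cu * h ^ 3 := mul_le_mul_of_nonneg_left hMs (by linarith)
    nlinarith
  have hχ0 : 0 < χ₀ := by linarith
  unfold Ffun
  constructor
  · by_cases hcase : t - h ^ 3 / M ≤ -T
    · have e1 := hlo (-T) le_rfl ht1 (by linarith)
      have hM4 : T ^ 2 / 4 ≤ M := by
        have hδ : h ^ 3 / M ≤ h := by
          rw [div_le_iff₀ hM0]
          nlinarith
        have : t ≤ -(T / 2) := by linarith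
        nlinarith
      have e2 : 0 ≤ ∫ s in (-T)..t, Real.exp ((∫ u in s..t, atil u) / h ^ 3) :=
        intervalIntegral.integral_nonneg ht1 (fun u _ => (Real.exp_pos _).le)
      have e3 : 0 ≤ (h ^ 3)⁻¹ * ∫ s in (-T)..t, Real.exp ((∫ u in s..t, atil u) / h ^ 3) := by
        positivity
      have e4 : xl * Real.exp (-(4 * cu)) ≤ χ₀ * Real.exp ((∫ u in (-T)..t, atil u) / h ^ 3) :=
        mul_le_mul h1 (Real.exp_le_exp.mpr e1) (Real.exp_pos _).le hχ0.le
      have e5 : min (Real.exp (-(4 * cu))) (xl * Real.exp (-(4 * cu)) * (T ^ 2 / 4)) / M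
          ≤ xl * Real.exp (-(4 * cu)) := by
        rw [div_le_iff₀ hM0]
        refine (min_le_right _ _).trans ?_
        exact mul_le_mul_of_nonneg_left hM4 (by positivity)
      linarith
    · push Not at hcase
      have hδ : 0 < h ^ 3 / M := by positivity
      have e1 : (∫ s in (t - h ^ 3 / M)..t, Real.exp (-(4 * cu)))
          ≤ ∫ s in (t - h ^ 3 / M)..t, Real.exp ((∫ u in s..t, atil u) / h ^ 3) := by
        apply intervalIntegral.integral_mono_on (by linarith) (by simp)
          (hcei _ _ hcase.le (by linarith) le_rfl)
        intro s hs
        exact Real.exp_le_exp.mpr (hlo s (by linarith [hs.1]) hs.2 (by linarith [hs.1]))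
      have e2 : 0 ≤ ∫ s in (-T)..(t - h ^ 3 / M), Real.exp ((∫ u in s..t, atil u) / h ^ 3) :=
        intervalIntegral.integral_nonneg hcase.le (fun u _ => (Real.exp_pos _).le)
      have e3 := intervalIntegral.integral_add_adjacent_intervals
        (hcei (-T) (t - h ^ 3 / M) le_rfl hcase.le (by linarith))
        (hcei (t - h ^ 3 / M) t hcase.le (by linarith) le_rfl)
      rw [intervalIntegral.integral_const, smul_eq_mul, sub_sub_cancel] at e1
      have e4 : 0 ≤ χ₀ * Real.exp ((∫ u in (-T)..t, atil u) / h ^ 3) := by positivity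
      have e5 : Real.exp (-(4 * cu)) / M
          ≤ (h ^ 3)⁻¹ * ∫ s in (-T)..t, Real.exp ((∫ u in s..t, atil u) / h ^ 3) := by
        have : Real.exp (-(4 * cu)) / M = (h ^ 3)⁻¹ * (h ^ 3 / M * Real.exp (-(4 * cu))) := by
          field_simp
        rw [this]
        exact mul_le_mul_of_nonneg_left (by linarith) (by positivity)
      have e6 : min (Real.exp (-(4 * cu))) (xl * Real.exp (-(4 * cu)) * (T ^ 2 / 4)) / M
          ≤ Real.exp (-(4 * cu)) / M :=
        div_le_div_of_nonneg_right (min_le_left _ _) hM0.le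
      linarith
  · have f1 : χ₀ * Real.exp ((∫ u in (-T)..t, atil u) / h ^ 3) ≤ xu * T ^ 2 / M := by
      have a1 : χ₀ * Real.exp ((∫ u in (-T)..t, atil u) / h ^ 3) ≤ xu * 1 :=
        mul_le_mul h2 (Real.exp_le_one_iff.mpr hneg) (Real.exp_pos _).le (by linarith)
      refine a1.trans ?_
      rw [le_div_iff₀ hM0, mul_one]
      exact mul_le_mul_of_nonneg_left hMT (by linarith)
    set k : ℝ := cl / 4 * M / h ^ 3 with hk
    have hk0 : 0 < k := by positivity
    have f2 : (∫ s in (-T)..t, Real.exp ((∫ u in s..t, atil u) / h ^ 3))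
        ≤ ∫ s in (-T)..t, Real.exp (cl / 6 - k * (t - s)) := by
      apply intervalIntegral.integral_mono_on ht1 (hcei _ _ le_rfl ht1 le_rfl)
        (Continuous.intervalIntegrable (by fun_prop) _ _)
      intro s hs
      exact Real.exp_le_exp.mpr (hup s hs.1 hs.2)
    have f3 : (∫ s in (-T)..t, Real.exp (cl / 6 - k * (t - s)))
        = Real.exp (cl / 6 - k * (t - t)) / k - Real.exp (cl / 6 - k * (t - -T)) / k := by
      apply intervalIntegral.integral_eq_sub_of_hasDerivAt
        (f := fun s => Real.exp (cl / 6 - k * (t - s)) / k)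
      · intro s _
        have d1 : HasDerivAt (fun s => cl / 6 - k * (t - s)) k s := by
          have := (((hasDerivAt_id s).const_sub t).const_mul k).const_sub (cl / 6)
          simpa using this
        have := d1.exp.div_const k
        simpa [hk0.ne'] using this
      · exact Continuous.intervalIntegrable (by fun_prop) _ _
    have f4 : (∫ s in (-T)..t, Real.exp ((∫ u in s..t, atil u) / h ^ 3))
        ≤ Real.exp (cl / 6) / k := by
      have : 0 < Real.exp (cl / 6 - k * (t - -T)) / k := by positivity
      rw [f3] at f2
      rw [sub_self, mul_zero, sub_zero] at f2
      linarith
    have f5 : (h ^ 3)⁻¹ * (∫ s in (-T)..t, Real.exp ((∫ u in s..t, atil u) / h ^ 3))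
        ≤ 4 * Real.exp (cl / 6) / cl / M := by
      have : 4 * Real.exp (cl / 6) / cl / M = (h ^ 3)⁻¹ * (Real.exp (cl / 6) / k) := by
        rw [hk]
        field_simp
      rw [this]
      exact mul_le_mul_of_nonneg_left f4 (by positivity)
    rw [add_div]
    linarith

/-- Lemma 3.2: two-sided bounds for
`F(t) = χ₀ e^{α̃(t,-T)/ε} + ε⁻¹ ∫_{-T}^t e^{α̃(t,s)/ε} ds` when the drift
coefficient `ã` is quadratically pinned, `-cu(β ∨ t²) ≤ ã(t) ≤ -cl(β ∨ t²)`. -/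
theorem lemma_slow_fast_quadratic (T cl cu xl xu : ℝ)
    (hT : 0 < T) (hc : 0 < cl) (hcc : cl ≤ cu) (hχ : 0 < xl) (hχχ : xl ≤ xu) :
    ∃ Cl Cu ε₀ : ℝ, 0 < Cl ∧ 0 < Cu ∧ 0 < ε₀ ∧
      ∀ (ε β χ₀ : ℝ) (atil : ℝ → ℝ),
        0 < ε → ε ≤ ε₀ → 0 ≤ β → β ≤ ε₀ →
        ContinuousOn atil (Icc (-T) T) →
        (∀ t, |t| ≤ T → -(cu * max β (t ^ 2)) ≤ atil t ∧ atil t ≤ -(cl * max β (t ^ 2))) →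
        xl ≤ χ₀ → χ₀ ≤ xu →
        ∀ t, |t| ≤ T →
          (|t| ≤ max (Real.sqrt β) (ε ^ ((1:ℝ)/3)) →
            Cl / max β (ε ^ ((2:ℝ)/3)) ≤ Ffun ε T atil χ₀ t ∧
            Ffun ε T atil χ₀ t ≤ Cu / max β (ε ^ ((2:ℝ)/3))) ∧
          (max (Real.sqrt β) (ε ^ ((1:ℝ)/3)) ≤ |t| →
            Cl / t ^ 2 ≤ Ffun ε T atil χ₀ t ∧ Ffun ε T atil χ₀ t ≤ Cu / t ^ 2) := by
  refine ⟨min (Real.exp (-(4 * cu))) (xl * Real.exp (-(4 * cu)) * (T ^ 2 / 4)),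
    xu * T ^ 2 + 4 * Real.exp (cl / 6) / cl, min (T ^ 2 / 4) ((T / 2) ^ 3),
    by positivity, ?_, by positivity, ?_⟩
  · have : 0 < xu := by linarith
    positivity
  intro ε β χ₀ atil hε hε₀ hβ hβ₀ hcont hb h1 h2 t ht
  obtain ⟨h, hh⟩ : ∃ h, h = ε ^ ((1:ℝ)/3) := ⟨_, rfl⟩
  have hpos : 0 < h := by rw [hh]; positivity
  have h3 : ε = h ^ 3 := by
    rw [hh, ← Real.rpow_natCast, ← Real.rpow_mul hε.le]
    norm_num
  have hsq : ε ^ ((2:ℝ)/3) = h ^ 2 := by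
    rw [hh, ← Real.rpow_natCast, ← Real.rpow_mul hε.le]
    norm_num
  rw [hsq, ← hh]
  have hhT : h ≤ T / 2 := by
    have : h ^ 3 ≤ (T / 2) ^ 3 := by rw [← h3]; exact hε₀.trans (min_le_right _ _)
    exact le_of_pow_le_pow_left₀ (by norm_num) (by positivity) this
  have core := aux_core T cl cu xl xu h β χ₀ t atil hT hc hcc hχ hpos hhT hβ
    (hβ₀.trans (min_le_left _ _)) hcont hb h1 h2 ht _ rfl
  rw [← h3] at core
  have hsβ : Real.sqrt β ^ 2 = β := Real.sq_sqrt hβ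
  constructor
  · intro hle
    have : t ^ 2 ≤ max β (h ^ 2) := by
      rw [← sq_abs]
      rcases le_max_iff.mp hle with hl | hl
      · exact le_max_of_le_left (by
          have := pow_le_pow_left₀ (abs_nonneg t) hl 2
          linarith)
      · exact le_max_of_le_right (pow_le_pow_left₀ (abs_nonneg t) hl 2)
    rwa [max_eq_left this] at core
  · intro hle
    have : max β (h ^ 2) ≤ t ^ 2 := by
      rw [← sq_abs t]
      refine max_le ?_ ?_
      · have := pow_le_pow_left₀ (Real.sqrt_nonneg β) ((le_max_left _ _).trans hle) 2
        linarith
      · exact pow_le_pow_left₀ hpos.le ((le_max_right _ _).trans hle) 2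
    rwa [max_eq_right this] at core

end BerglundGentz
end

section
/- (Lemma 4.1.) Fix T > 0. For all positive constants c₋ ≤ c₊ and χ₋ ≤ χ₊ there exist positive constants C₋, C₊ and ε₀ such that the following holds for all ε ∈ (0,ε₀]: let β = β(ε) ≥ 0 with β → 0 as ε → 0, let ã : [−T,T] → ℝ be continuous with −c₊(β ∨ |t|) ≤ ã(t) ≤ −c₋(β ∨ |t|) for all |t| ≤ T, let χ₀ ∈ [χ₋, χ₊], and set α̃(t,s) = ∫_s^t ã(u) du. Then the function F(t) := χ₀ e^{α̃(t,−T)/ε} + ε⁻¹∫_{−T}^t e^{α̃(t,s)/ε} ds satisfies C₋/(β ∨ √ε) ≤ F(t) ≤ C₊/(β ∨ √ε) for |t| ≤ β ∨ √ε, and C₋/|t| ≤ F(t) ≤ C₊/|t| for β ∨ √ε ≤ |t| ≤ T. -/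
open MeasureTheory Real Set

namespace BerglundGentz

theorem aux_int_abs0 (t : ℝ) : ∫ u in (0:ℝ)..t, |u| = t * |t| / 2 := by
  rcases le_total 0 t with h | h
  · have : ∫ u in (0:ℝ)..t, |u| = ∫ u in (0:ℝ)..t, u := by
      apply intervalIntegral.integral_congr
      intro u hu
      rw [uIcc_of_le h] at hu
      exact abs_of_nonneg hu.1
    rw [this, integral_id, abs_of_nonneg h]; ring
  · have : ∫ u in (0:ℝ)..t, |u| = ∫ u in (0:ℝ)..t, -u := by
      apply intervalIntegral.integral_congr
      intro u hu
      rw [uIcc_of_ge h] at hu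
      exact abs_of_nonpos hu.2
    rw [this, intervalIntegral.integral_neg, integral_id, abs_of_nonpos h]; ring

theorem aux_int_abs (s t : ℝ) : ∫ u in s..t, |u| = t * |t| / 2 - s * |s| / 2 := by
  rw [← aux_int_abs0 t, ← aux_int_abs0 s]
  have h : ∀ a b : ℝ, IntervalIntegrable (fun u : ℝ => |u|) volume a b :=
    fun a b => continuous_abs.intervalIntegrable a b
  have := intervalIntegral.integral_add_adjacent_intervals (h 0 s) (h s t)
  linarith

theorem aux_abs_lower1 (s t : ℝ) (h : s ≤ t) : (t - s) ^ 2 / 4 ≤ ∫ u in s..t, |u| := by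
  rw [aux_int_abs]
  rcases le_total 0 t with ht | ht <;> rcases le_total 0 s with hs | hs <;>
    simp only [abs_of_nonneg, abs_of_nonpos, ht, hs] <;>
    nlinarith [sq_nonneg (s + t), sq_nonneg (t - s), mul_nonneg (sub_nonneg.2 h) (sub_nonneg.2 h)]

theorem aux_abs_lower2 (s t : ℝ) (h : s ≤ t) : |t| * (t - s) / 4 ≤ ∫ u in s..t, |u| := by
  rw [aux_int_abs]
  rcases le_total 0 t with ht | ht <;> rcases le_total 0 s with hs | hs <;>
    simp only [abs_of_nonneg, abs_of_nonpos, ht, hs] <;>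
    nlinarith [sq_nonneg (s + t), sq_nonneg (t - s), sq_nonneg s, sq_nonneg t,
      mul_nonneg (sub_nonneg.2 h) (sub_nonneg.2 h)]

theorem aux_ii {T : ℝ} {a : ℝ → ℝ} (ha : ContinuousOn a (Icc (-T) T)) {s t : ℝ}
    (hs : s ∈ Icc (-T) T) (ht : t ∈ Icc (-T) T) : IntervalIntegrable a volume s t :=
  (ha.mono (uIcc_subset_Icc hs ht)).intervalIntegrable

theorem aux_upper {T cl ε β : ℝ} {a : ℝ → ℝ} (hc : 0 < cl) (hε : 0 < ε)
    (ha : ContinuousOn a (Icc (-T) T))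
    (hb : ∀ t, |t| ≤ T → a t ≤ -(cl * max β |t|)) {s t : ℝ}
    (hs : s ∈ Icc (-T) T) (ht : t ∈ Icc (-T) T) (hst : s ≤ t) :
    (∫ u in s..t, a u) / ε ≤
      cl / 4 - cl / 4 * max (max β (Real.sqrt ε)) |t| / ε * (t - s) := by
  have hab : ∀ u ∈ Icc s t, |u| ≤ T := fun u hu =>
    abs_le.2 ⟨hs.1.trans hu.1, hu.2.trans ht.2⟩
  have e1 : ∫ u in s..t, a u ≤ ∫ u in s..t, -(cl * |u|) := by
    apply intervalIntegral.integral_mono_on hst (aux_ii ha hs ht)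
    · exact Continuous.intervalIntegrable (by fun_prop) _ _
    · intro u hu
      refine (hb u (hab u hu)).trans ?_
      have := le_max_right β |u|
      nlinarith
  have e2 : ∫ u in s..t, a u ≤ ∫ u in s..t, -(cl * β) := by
    apply intervalIntegral.integral_mono_on hst (aux_ii ha hs ht)
    · exact Continuous.intervalIntegrable (by fun_prop) _ _
    · intro u hu
      refine (hb u (hab u hu)).trans ?_
      have := le_max_left β |u|
      nlinarith
  rw [intervalIntegral.integral_neg, intervalIntegral.integral_const_mul] at e1
  rw [intervalIntegral.integral_const, smul_eq_mul] at e2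
  have l1 := aux_abs_lower1 s t hst
  have l2 := aux_abs_lower2 s t hst
  have hq : 0 < Real.sqrt ε := Real.sqrt_pos.2 hε
  have hqq : Real.sqrt ε * Real.sqrt ε = ε := Real.mul_self_sqrt hε.le
  have hd : 0 ≤ t - s := sub_nonneg.2 hst
  have key : (∫ u in s..t, a u) ≤
      cl / 4 * ε - cl / 4 * max (max β (Real.sqrt ε)) |t| * (t - s) := by
    have hce : 0 < cl * ε := mul_pos hc hε
    rcases max_choice (max β (Real.sqrt ε)) |t| with h | h
    · rw [h]
      rcases max_choice β (Real.sqrt ε) with h' | h'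
      · rw [h']
        have hβ : 0 ≤ β := hq.le.trans (h' ▸ le_max_right β (Real.sqrt ε))
        nlinarith [mul_nonneg (mul_nonneg hc.le hβ) hd]
      · rw [h']
        have h3 : Real.sqrt ε * (t - s) - ε ≤ (t - s) ^ 2 / 4 := by
          nlinarith [sq_nonneg ((t - s) / 2 - Real.sqrt ε)]
        have h4 : (Real.sqrt ε * (t - s) - ε) / 4 ≤ ∫ u in s..t, |u| := by
          nlinarith [sq_nonneg ((t - s)), l1]
        nlinarith [mul_le_mul_of_nonneg_left h4 hc.le]
    · rw [h]
      nlinarith [mul_le_mul_of_nonneg_left l2 hc.le]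
  rw [div_le_iff₀ hε]
  refine key.trans (le_of_eq ?_)
  field_simp

theorem aux_lower {T cu ε β : ℝ} {a : ℝ → ℝ} (hc : 0 < cu) (hε : 0 < ε)
    (ha : ContinuousOn a (Icc (-T) T))
    (hb : ∀ t, |t| ≤ T → -(cu * max β |t|) ≤ a t) {s t m : ℝ}
    (hs : s ∈ Icc (-T) T) (ht : t ∈ Icc (-T) T) (hst : s ≤ t)
    (hm : 0 < m) (hβ : β ≤ m) (hεm : ε / m ≤ m) (htm : |t| ≤ m) (hsm : t - ε / m ≤ s) :
    -(2 * cu) ≤ (∫ u in s..t, a u) / ε := by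
  have htm' := abs_le.1 htm
  have e1 : ∫ u in s..t, -(cu * (2 * m)) ≤ ∫ u in s..t, a u := by
    apply intervalIntegral.integral_mono_on hst _ (aux_ii ha hs ht)
    · intro u hu
      refine le_trans ?_ (hb u (abs_le.2 ⟨hs.1.trans hu.1, hu.2.trans ht.2⟩))
      have : max β |u| ≤ 2 * m := by
        apply max_le (by linarith)
        rw [abs_le]
        constructor <;> linarith [hu.1, hu.2]
      nlinarith
    · exact Continuous.intervalIntegrable (by fun_prop) _ _
  rw [intervalIntegral.integral_const, smul_eq_mul] at e1
  rw [le_div_iff₀ hε]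
  refine le_trans ?_ e1
  have h1 : (t - s) * m ≤ ε := by
    rw [← le_div_iff₀ hm]; linarith
  nlinarith [mul_le_mul_of_nonneg_left h1 hc.le]

theorem aux_main {T cl cu xl xu ε β χ₀ : ℝ} {a : ℝ → ℝ}
    (hT : 0 < T) (hc : 0 < cl) (hcc : cl ≤ cu) (hχ : 0 < xl)
    (hε : 0 < ε) (hε1 : ε ≤ 1) (hβ0 : 0 ≤ β) (hβ : β ≤ 1)
    (ha : ContinuousOn a (Icc (-T) T))
    (hb : ∀ t, |t| ≤ T → -(cu * max β |t|) ≤ a t ∧ a t ≤ -(cl * max β |t|))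
    (hl : xl ≤ χ₀) (hu : χ₀ ≤ xu) (t : ℝ) (htT : |t| ≤ T) :
    min 1 (xl * T / 2) * Real.exp (-(2 * cu)) / max (max β (Real.sqrt ε)) |t|
        ≤ Ffun ε T a χ₀ t ∧
      Ffun ε T a χ₀ t ≤
        (xu * (1 + T) + 4 * Real.exp (cl / 4) / cl) / max (max β (Real.sqrt ε)) |t| := by
  have hcu : 0 < cu := hc.trans_le hcc
  have hq : 0 < Real.sqrt ε := Real.sqrt_pos.2 hε
  have hqq : Real.sqrt ε * Real.sqrt ε = ε := Real.mul_self_sqrt hε.le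
  have hq1 : Real.sqrt ε ≤ 1 := Real.sqrt_le_one.2 hε1
  have ht : t ∈ Icc (-T) T := abs_le.1 htT
  have hTm : -T ∈ Icc (-T) T := ⟨le_rfl, by linarith⟩
  have hup := fun s (hs : s ∈ Icc (-T) t) =>
    aux_upper (s := s) (t := t) hc hε ha (fun t h => (hb t h).2) ⟨hs.1, hs.2.trans ht.2⟩ ht hs.2
  obtain ⟨m, hm⟩ : ∃ m, m = max (max β (Real.sqrt ε)) |t| := ⟨_, rfl⟩
  rw [← hm] at hup ⊢
  have hmβ : β ≤ m := hm ▸ (le_max_left _ _).trans (le_max_left _ _)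
  have hmq : Real.sqrt ε ≤ m := hm ▸ (le_max_right _ _).trans (le_max_left _ _)
  have hmt : |t| ≤ m := hm ▸ le_max_right _ _
  have hm0 : 0 < m := hq.trans_le hmq
  have hm1 : m ≤ 1 + T := hm ▸ max_le (max_le (by linarith) (by linarith)) (by linarith)
  have hεm : ε / m ≤ m := by
    rw [div_le_iff₀ hm0]; nlinarith
  have hlow := fun s (hs : s ∈ Icc (-T) t) (h : t - ε / m ≤ s) =>
    aux_lower (s := s) (t := t) hcu hε ha (fun t h => (hb t h).1) ⟨hs.1, hs.2.trans ht.2⟩ ht hs.2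
      hm0 hmβ hεm hmt h
  have hcont : ContinuousOn (fun s => Real.exp ((∫ u in s..t, a u) / ε)) (Icc (-T) t) := by
    have := intervalIntegral.continuousOn_primitive_interval_left (μ := volume) (f := a)
      (a := -T) (b := t) (by
        rw [uIcc_of_le ht.1]
        exact (ha.mono (Icc_subset_Icc_right ht.2)).integrableOn_Icc)
    rw [uIcc_of_le ht.1] at this
    exact Real.continuous_exp.comp_continuousOn (this.div_const ε)
  have hii : ∀ p ∈ Icc (-T) t, ∀ q ∈ Icc (-T) t,
      IntervalIntegrable (fun s => Real.exp ((∫ u in s..t, a u) / ε)) volume p q :=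
    fun p hp q hq => (hcont.mono (uIcc_subset_Icc hp hq)).intervalIntegrable
  have hmT : -T ∈ Icc (-T) t := ⟨le_rfl, ht.1⟩
  have htt : t ∈ Icc (-T) t := ⟨ht.1, le_rfl⟩
  have hnn : ∀ p q : ℝ, p ≤ q → 0 ≤ ∫ s in p..q, Real.exp ((∫ u in s..t, a u) / ε) :=
    fun p q h => intervalIntegral.integral_nonneg h (fun _ _ => (Real.exp_pos _).le)
  have hχ0 : 0 < χ₀ := hχ.trans_le hl
  unfold Ffun
  constructor
  · rw [div_le_iff₀ hm0]
    have hE := Real.exp_pos (-(2 * cu))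
    rcases le_total (-T) (t - ε / m) with h | h
    · have hp : t - ε / m ∈ Icc (-T) t := ⟨h, by linarith [div_pos hε hm0]⟩
      have h1 : ∫ s in (t - ε / m)..t, Real.exp (-(2 * cu)) ≤
          ∫ s in (t - ε / m)..t, Real.exp ((∫ u in s..t, a u) / ε) := by
        apply intervalIntegral.integral_mono_on hp.2 _ (hii _ hp _ htt)
        · intro s hs
          exact Real.exp_le_exp.2 (hlow s ⟨h.trans hs.1, hs.2⟩ hs.1)
        · exact Continuous.intervalIntegrable (by fun_prop) _ _
      rw [intervalIntegral.integral_const, smul_eq_mul] at h1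
      have h2 := intervalIntegral.integral_add_adjacent_intervals (hii _ hmT _ hp) (hii _ hp _ htt)
      have h3 := hnn _ _ h
      have h4 : ε / m * Real.exp (-(2 * cu)) ≤
          ∫ s in (-T)..t, Real.exp ((∫ u in s..t, a u) / ε) := by linarith
      have h5 := mul_le_mul_of_nonneg_left h4 (inv_pos.2 hε).le
      have h6 : ε⁻¹ * (ε / m * Real.exp (-(2 * cu))) * m = Real.exp (-(2 * cu)) := by
        field_simp
      have h7 := mul_le_mul_of_nonneg_right h5 hm0.le
      have h8 : 0 ≤ χ₀ * Real.exp ((∫ u in (-T)..t, a u) / ε) * m := by positivity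
      have h9 : min 1 (xl * T / 2) * Real.exp (-(2 * cu)) ≤ Real.exp (-(2 * cu)) :=
        mul_le_of_le_one_left hE.le (min_le_left _ _)
      linarith
    · have h1 := Real.exp_le_exp.2 (hlow (-T) hmT h)
      have h2 : T / 2 ≤ m := by linarith [(abs_le.1 hmt).1]
      have h3 : 0 ≤ ε⁻¹ * ∫ s in (-T)..t, Real.exp ((∫ u in s..t, a u) / ε) :=
        mul_nonneg (inv_pos.2 hε).le (hnn _ _ ht.1)
      calc min 1 (xl * T / 2) * Real.exp (-(2 * cu))
          ≤ (xl * T / 2) * Real.exp (-(2 * cu)) :=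
            mul_le_mul_of_nonneg_right (min_le_right _ _) hE.le
        _ = xl * Real.exp (-(2 * cu)) * (T / 2) := by ring
        _ ≤ χ₀ * Real.exp ((∫ u in (-T)..t, a u) / ε) * m := by gcongr
        _ ≤ _ := by gcongr; linarith
  · rw [le_div_iff₀ hm0]
    have hk : 0 < cl / 4 * m / ε := by positivity
    obtain ⟨k, hkk⟩ : ∃ k, k = cl / 4 * m / ε := ⟨_, rfl⟩
    rw [← hkk] at hup hk
    have h1 : ∫ s in (-T)..t, Real.exp ((∫ u in s..t, a u) / ε) ≤
        ∫ s in (-T)..t, Real.exp (cl / 4 - k * (t - s)) := by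
      apply intervalIntegral.integral_mono_on ht.1 (hii _ hmT _ htt)
      · exact Continuous.intervalIntegrable (by fun_prop) _ _
      · intro s hs
        exact Real.exp_le_exp.2 (hup s hs)
    have h2 : ∫ s in (-T)..t, Real.exp (cl / 4 - k * (t - s)) =
        Real.exp (cl / 4 - k * (t - t)) / k - Real.exp (cl / 4 - k * (t - -T)) / k := by
      apply intervalIntegral.integral_eq_sub_of_hasDerivAt
        (f := fun s => Real.exp (cl / 4 - k * (t - s)) / k)
      · intro s _
        have := (((((hasDerivAt_id s).const_sub t).const_mul k).const_sub (cl / 4)).exp).div_const k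
        have e : Real.exp (cl / 4 - k * (t - id s)) * -(k * -1) / k =
            Real.exp (cl / 4 - k * (t - s)) := by
          simp only [id]
          field_simp
          try ring
        rw [e] at this
        exact this
      · exact Continuous.intervalIntegrable (by fun_prop) _ _
    have h3 : ∫ s in (-T)..t, Real.exp ((∫ u in s..t, a u) / ε) ≤ Real.exp (cl / 4) / k := by
      have : 0 ≤ Real.exp (cl / 4 - k * (t - -T)) / k := by positivity
      rw [sub_self, mul_zero, sub_zero] at h2
      linarith
    have h4 : ε⁻¹ * (∫ s in (-T)..t, Real.exp ((∫ u in s..t, a u) / ε)) * m ≤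
        4 * Real.exp (cl / 4) / cl := by
      have h5 := mul_le_mul_of_nonneg_right
        (mul_le_mul_of_nonneg_left h3 (inv_pos.2 hε).le) hm0.le
      refine h5.trans (le_of_eq ?_)
      rw [hkk]; field_simp
    have h6 : Real.exp ((∫ u in (-T)..t, a u) / ε) ≤ 1 := by
      rw [Real.exp_le_one_iff]
      apply div_nonpos_of_nonpos_of_nonneg _ hε.le
      have : 0 ≤ ∫ u in (-T)..t, -a u := by
        apply intervalIntegral.integral_nonneg ht.1
        intro u hu
        have h8 := (hb u (abs_le.2 ⟨hu.1, hu.2.trans ht.2⟩)).2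
        have : 0 ≤ cl * max β |u| := mul_nonneg hc.le (hβ0.trans (le_max_left _ _))
        linarith
      rw [intervalIntegral.integral_neg] at this
      linarith
    have h7 : χ₀ * Real.exp ((∫ u in (-T)..t, a u) / ε) * m ≤ xu * (1 + T) := by
      calc _ ≤ χ₀ * 1 * m := by gcongr
        _ = χ₀ * m := by ring
        _ ≤ xu * (1 + T) := by gcongr; linarith
    linarith

/-- Lemma 4.1: two-sided bounds for
`F(t) = χ₀ e^{α̃(t,-T)/ε} + ε⁻¹ ∫_{-T}^t e^{α̃(t,s)/ε} ds` when the drift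
coefficient `ã` is linearly pinned, `-cu(β ∨ |t|) ≤ ã(t) ≤ -cl(β ∨ |t|)`. -/
theorem lemma_slow_fast_linear (T cl cu xl xu : ℝ)
    (hT : 0 < T) (hc : 0 < cl) (hcc : cl ≤ cu) (hχ : 0 < xl) (hχχ : xl ≤ xu) :
    ∃ Cl Cu ε₀ : ℝ, 0 < Cl ∧ 0 < Cu ∧ 0 < ε₀ ∧
      ∀ (ε β χ₀ : ℝ) (atil : ℝ → ℝ),
        0 < ε → ε ≤ ε₀ → 0 ≤ β → β ≤ ε₀ →
        ContinuousOn atil (Icc (-T) T) →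
        (∀ t, |t| ≤ T → -(cu * max β |t|) ≤ atil t ∧ atil t ≤ -(cl * max β |t|)) →
        xl ≤ χ₀ → χ₀ ≤ xu →
        ∀ t, |t| ≤ T →
          (|t| ≤ max β (Real.sqrt ε) →
            Cl / max β (Real.sqrt ε) ≤ Ffun ε T atil χ₀ t ∧
            Ffun ε T atil χ₀ t ≤ Cu / max β (Real.sqrt ε)) ∧
          (max β (Real.sqrt ε) ≤ |t| →
            Cl / |t| ≤ Ffun ε T atil χ₀ t ∧ Ffun ε T atil χ₀ t ≤ Cu / |t|) := by
  have hxu : 0 < xu := hχ.trans_le hχχ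
  refine ⟨min 1 (xl * T / 2) * Real.exp (-(2 * cu)),
    xu * (1 + T) + 4 * Real.exp (cl / 4) / cl, 1, ?_, by positivity, one_pos, ?_⟩
  · exact mul_pos (lt_min one_pos (by positivity)) (Real.exp_pos _)
  intro ε β χ₀ atil hε hε1 hβ0 hβ ha hb hl hu t ht
  have h := aux_main hT hc hcc hχ hε hε1 hβ0 hβ ha hb hl hu t ht
  constructor
  · intro h1
    rwa [max_eq_left h1] at h
  · intro h1
    rwa [max_eq_right h1] at h

end BerglundGentz
end
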